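/- Let q be an odd prime power and let a, b, c be the three nontrivial elements of a Klein four-subgroup of PSL(2,q), and let d be any element of order 2 in PSL(2,q). Then θ(ad) + θ(bd) + θ(cd) = 4. -/

import Mathlib

open Matrix

/-- `θ(M) = (tr M)² / det M` for an invertible 2×2 matrix `M`. -/
noncomputable def theta {F : Type*} [Field F] (M : GL (Fin 2) F) : F :=
  (Matrix.trace (M : Matrix (Fin 2) (Fin 2) F)) ^ 2 / (M : Matrix (Fin 2) (Fin 2) F).det

/-- `PGL(2, F)`, the quotient of `GL(2, F)` by its centre (the nonzero scalar matrices). -/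
abbrev PGL2 (F : Type*) [Field F] := GL (Fin 2) F ⧸ Subgroup.center (GL (Fin 2) F)

/-- The conjugacy invariant `θ` on `PGL(2, F)` induced by `M ↦ (tr M)²/det M`
(well defined since `θ` is invariant under scalar multiplication). -/
noncomputable def thetaPGL {F : Type*} [Field F] (g : PGL2 F) : F :=
  theta (Quotient.out g)

/-- `PSL(2, F)` viewed as a subgroup of `PGL(2, F)`: the image of `SL(2, F)`. -/
def PSLsub (F : Type*) [Field F] : Subgroup (PGL2 F) :=
  ((QuotientGroup.mk' (Subgroup.center (GL (Fin 2) F))).comp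
    Matrix.SpecialLinearGroup.toGL).range


theorem pyth_identity {F : Type*} [Field F] (a1 a2 a3 b1 b2 b3 d1 d2 d3 : F)
    (hA : -a1^2-a2*a3=1) (hB : -b1^2-b2*b3=1) (hD : -d1^2-d2*d3=1)
    (hAB : 2*a1*b1+a2*b3+a3*b2=0) :
    (2*a1*d1+a2*d3+a3*d2)^2+(2*b1*d1+b2*d3+b3*d2)^2
      +((a1*b1+a2*b3)*d1+(a1*b2-a2*b1)*d3+(a3*b1-a1*b3)*d2-(a3*b2+a1*b1)*d1)^2=4 := by
  grind

theorem mem_center_entries {F : Type*} [Field F] (M : GL (Fin 2) F) :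
    M ∈ Subgroup.center (GL (Fin 2) F) ↔
      M.1 0 1 = 0 ∧ M.1 1 0 = 0 ∧ M.1 0 0 = M.1 1 1 := by
  rw [Matrix.GeneralLinearGroup.mem_center_iff_val_mem_range_scalar]
  constructor
  · rintro ⟨r, hr⟩
    rw [← hr]
    simp
  · rintro ⟨h1, h2, h3⟩
    refine ⟨M.1 0 0, ?_⟩
    ext i j
    fin_cases i <;> fin_cases j <;> simp [h1, h2, h3]

theorem thetaPGL_mk {F : Type*} [Field F] (M : GL (Fin 2) F) :
    thetaPGL (QuotientGroup.mk M : PGL2 F) = theta M := by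
  unfold thetaPGL
  obtain ⟨z, hz⟩ := QuotientGroup.mk_out_eq_mul (Subgroup.center (GL (Fin 2) F)) M
  have hz' : (Quotient.out (QuotientGroup.mk M : PGL2 F)) = M * z := hz
  rw [hz']
  obtain ⟨h1, h2, h3⟩ := (mem_center_entries z.1).1 z.2
  have hd : z.1.1.det ≠ 0 := ((Matrix.isUnit_iff_isUnit_det _).1 z.1.isUnit).ne_zero
  have hM : M.1.det ≠ 0 := ((Matrix.isUnit_iff_isUnit_det _).1 M.isUnit).ne_zero
  unfold theta
  rw [Units.val_mul, Matrix.det_mul]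
  rw [div_eq_div_iff (mul_ne_zero hM hd) hM]
  simp only [Matrix.det_fin_two, Matrix.trace_fin_two, Matrix.mul_apply, Fin.sum_univ_two,
    h1, h2, h3]
  ring

theorem trace_zero_of_sq {F : Type*} [Field F] (M : GL (Fin 2) F)
    (h1 : (QuotientGroup.mk M : PGL2 F) ≠ 1) (h2 : (QuotientGroup.mk M : PGL2 F) ^ 2 = 1) :
    M.1 1 1 = - M.1 0 0 := by
  rw [← QuotientGroup.mk_pow, QuotientGroup.eq_one_iff, mem_center_entries] at h2
  rw [Ne, QuotientGroup.eq_one_iff, mem_center_entries] at h1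
  simp only [pow_two, Units.val_mul, Matrix.mul_apply, Fin.sum_univ_two] at h2
  obtain ⟨e1, e2, e3⟩ := h2
  by_contra hne
  have ht : M.1 0 0 + M.1 1 1 ≠ 0 := fun h => hne (by linear_combination h)
  apply h1
  refine ⟨mul_left_cancel₀ ht ?_, mul_left_cancel₀ ht ?_, mul_left_cancel₀ ht ?_⟩
  · linear_combination e1
  · linear_combination e2
  · linear_combination e3

theorem exists_lift {F : Type*} [Field F] (a : PGL2 F) (ha : a ∈ PSLsub F) :
    ∃ M : GL (Fin 2) F, M.1.det = 1 ∧ (QuotientGroup.mk M : PGL2 F) = a := by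
  obtain ⟨A, rfl⟩ := ha
  exact ⟨Matrix.SpecialLinearGroup.toGL A, A.2, rfl⟩

/-- The Pythagorean Lemma. -/
theorem pythagorean_lemma (F : Type*) [Field F] [Fintype F]
    (hodd : Odd (Fintype.card F))
    (a b c d : PGL2 F)
    (ha : a ∈ PSLsub F) (hb : b ∈ PSLsub F) (hc : c ∈ PSLsub F)
    (ha1 : a ≠ 1) (hb1 : b ≠ 1) (hab : a ≠ b)
    (ha2 : a ^ 2 = 1) (hb2 : b ^ 2 = 1) (hcomm : a * b = b * a) (hcab : c = a * b)
    (hd : d ∈ PSLsub F) (hd2 : orderOf d = 2) :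
    thetaPGL (a * d) + thetaPGL (b * d) + thetaPGL (c * d) = 4 := by
  have hc1 : a * b ≠ 1 := by
    intro h
    apply hab
    have hbb : b * b = 1 := by rw [← pow_two, hb2]
    exact mul_right_cancel (h.trans hbb.symm)
  have hc2 : (a * b) ^ 2 = 1 := by
    rw [(show Commute a b from hcomm).mul_pow, ha2, hb2, one_mul]
  have hd1 : d ≠ 1 := by
    rintro rfl
    simp at hd2
  have hd3 : d ^ 2 = 1 := orderOf_dvd_iff_pow_eq_one.1 hd2.dvd
  subst hcab
  obtain ⟨A, hA, rfl⟩ := exists_lift a ha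
  obtain ⟨B, hB, rfl⟩ := exists_lift b hb
  obtain ⟨D, hD, rfl⟩ := exists_lift d hd
  have tA := trace_zero_of_sq A ha1 ha2
  have tB := trace_zero_of_sq B hb1 hb2
  have tD := trace_zero_of_sq D hd1 hd3
  have tC := trace_zero_of_sq (A * B) hc1 hc2
  simp only [← QuotientGroup.mk_mul, thetaPGL_mk]
  unfold theta
  simp only [Units.val_mul, Matrix.det_mul, hA, hB, hD, mul_one, div_one]
  simp only [Units.val_mul, Matrix.det_fin_two, Matrix.trace_fin_two, Matrix.mul_apply,
    Fin.sum_univ_two, tA, tB, tD] at *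
  have key := pyth_identity (A.1 0 0) (A.1 0 1) (A.1 1 0) (B.1 0 0) (B.1 0 1) (B.1 1 0)
    (D.1 0 0) (D.1 0 1) (D.1 1 0) (by linear_combination hA) (by linear_combination hB)
    (by linear_combination hD) (by linear_combination tC)
  linear_combination key
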